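/- Let α ∈ ℝ and u ∈ C_c^∞(ℝ² \ {0}). Define the vector potential a_α(x) = α(-x₂, x₁)/|x|². Then for every R > 0, ∫_{|x|≤R} |((1/i)∇ - a_α) u|² dx ≥ ρ(α) ∫_{|x|≤R} |u|²/|x|² dx, where ρ(α) = min_{n∈ℤ}|n-α|². -/

import Mathlib

open Real MeasureTheory

/-- `ρ(α) = min_{n ∈ ℤ} |n - α|²`. -/
noncomputable def rho (α : ℝ) : ℝ := sInf {d : ℝ | ∃ n : ℤ, d = ((n : ℝ) - α) ^ 2}

/-!
On each circle about the origin, the function `u` has a Fourier expansion in the angle, and the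
operator `(1/i)∂_θ - α` multiplies the mode `e^{inθ}` by `n - α`. Parseval's identity therefore
bounds the `L²` norm of `((1/i)∂_θ - α)u` on the circle from below by `√ρ(α)` times that of `u`.
The angular component of `((1/i)∇ - a_α)u` is `((1/i)∂_θ - α)u / |x|`; dropping the radial
component and integrating over the radii gives the inequality.
-/

lemma rho_le (α : ℝ) (n : ℤ) : rho α ≤ ((n : ℝ) - α) ^ 2 :=
  csInf_le ⟨0, by rintro _ ⟨m, rfl⟩; positivity⟩ ⟨n, rfl⟩

lemma rho_nonneg (α : ℝ) : 0 ≤ rho α :=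
  Real.sInf_nonneg (by rintro _ ⟨n, rfl⟩; positivity)

section Fourier

variable {a b : ℝ} {f g : ℝ → ℂ}

lemma fourierCoeffOn_sub (hab : a < b) (hf : IntervalIntegrable f volume a b)
    (hg : IntervalIntegrable g volume a b) (n : ℤ) :
    fourierCoeffOn hab (fun x => f x - g x) n =
      fourierCoeffOn hab f n - fourierCoeffOn hab g n := by
  have hcont : ContinuousOn (fun x : ℝ => fourier (-n) (x : AddCircle (b - a))) (Set.uIcc a b) :=
    ((map_continuous (fourier (-n))).comp (AddCircle.continuous_mk' _)).continuousOn
  simp only [fourierCoeffOn_eq_integral, smul_sub]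
  rw [intervalIntegral.integral_sub (hf.continuousOn_smul hcont) (hg.continuousOn_smul hcont),
    smul_sub]

lemma fourierCoeffOn_deriv_of_endpoints_eq (hab : a < b) {f' : ℝ → ℂ}
    (hf : ∀ x ∈ Set.uIcc a b, HasDerivAt f (f' x) x) (hf' : IntervalIntegrable f' volume a b)
    (hper : f b = f a) (n : ℤ) :
    fourierCoeffOn hab f' n = 2 * π * Complex.I * n / (b - a) * fourierCoeffOn hab f n := by
  rcases eq_or_ne n 0 with rfl | hn
  · have hint : ∫ x in a..b, f' x = 0 := by
      rw [intervalIntegral.integral_eq_sub_of_hasDerivAt hf hf', hper, sub_self]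
    simp [fourierCoeffOn_eq_integral, hint]
  · rw [fourierCoeffOn_of_hasDerivAt hab hn hf hf', hper]
    have hn' : (n : ℂ) ≠ 0 := mod_cast hn
    have hba : (b : ℂ) - a ≠ 0 := mod_cast (sub_pos.2 hab).ne'
    field_simp
    ring

end Fourier

lemma neg_pi_lt_pi : -π < π := neg_lt_self Real.pi_pos

lemma memLp_Ioc_of_continuousOn_Icc {E : Type*} [NormedAddCommGroup E] {f : ℝ → E} {a b : ℝ}
    (hf : ContinuousOn f (Set.Icc a b)) (p : ENNReal) :
    MemLp f p (volume.restrict (Set.Ioc a b)) := by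
  obtain ⟨C, hC⟩ := isCompact_Icc.exists_bound_of_continuousOn hf
  refine MemLp.of_bound
    ((hf.mono Set.Ioc_subset_Icc_self).aestronglyMeasurable measurableSet_Ioc) C ?_
  filter_upwards [ae_restrict_mem measurableSet_Ioc] with x hx
  exact hC x (Set.Ioc_subset_Icc_self hx)

lemma setLIntegral_Ioo_ofReal {h : ℝ → ℝ} {a b : ℝ} (hab : a ≤ b)
    (hh : IntervalIntegrable h volume a b) (hnonneg : 0 ≤ h) :
    ∫⁻ θ in Set.Ioo a b, ENNReal.ofReal (h θ) = ENNReal.ofReal (∫ θ in a..b, h θ) := by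
  rw [intervalIntegral.integral_of_le hab, ← restrict_Ioo_eq_restrict_Ioc,
    ofReal_integral_eq_lintegral_ofReal _ (ae_of_all _ hnonneg)]
  exact (intervalIntegrable_iff_integrableOn_Ioo_of_le hab).1 hh

section Circle

variable {f f' : ℝ → ℂ}

lemma fourierCoeffOn_angularMomentum_sub (α : ℝ)
    (hf : ∀ θ ∈ Set.uIcc (-π) π, HasDerivAt f (f' θ) θ)
    (hf' : IntervalIntegrable f' volume (-π) π) (hper : f π = f (-π)) (n : ℤ) :
    fourierCoeffOn neg_pi_lt_pi (fun θ => Complex.I⁻¹ * f' θ - α * f θ) n =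
      (n - α) * fourierCoeffOn neg_pi_lt_pi f n := by
  have hf_int : IntervalIntegrable f volume (-π) π :=
    ContinuousOn.intervalIntegrable fun θ hθ => (hf θ hθ).continuousAt.continuousWithinAt
  rw [fourierCoeffOn_sub _ (hf'.const_mul _) (hf_int.const_mul _), fourierCoeffOn.const_mul,
    fourierCoeffOn.const_mul, fourierCoeffOn_deriv_of_endpoints_eq _ hf hf' hper]
  have hpi : (π : ℂ) ≠ 0 := mod_cast Real.pi_ne_zero
  push_cast
  field_simp
  ring

lemma rho_mul_integral_norm_sq_le (α : ℝ)
    (hf : ∀ θ ∈ Set.Icc (-π) π, HasDerivAt f (f' θ) θ)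
    (hf' : MemLp f' 2 (volume.restrict (Set.Ioc (-π) π))) (hper : f π = f (-π)) :
    rho α * ∫ θ in (-π)..π, ‖f θ‖ ^ 2 ≤
      ∫ θ in (-π)..π, ‖Complex.I⁻¹ * f' θ - α * f θ‖ ^ 2 := by
  have hf_mem : MemLp f 2 (volume.restrict (Set.Ioc (-π) π)) :=
    memLp_Ioc_of_continuousOn_Icc
      (fun θ hθ => (hf θ hθ).continuousAt.continuousWithinAt) 2
  have hf'_int : IntervalIntegrable f' volume (-π) π :=
    (intervalIntegrable_iff_integrableOn_Ioc_of_le neg_pi_lt_pi.le).2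
      (hf'.integrable one_le_two)
  rw [← Set.uIcc_of_le neg_pi_lt_pi.le] at hf
  have hcoeff (n : ℤ) : rho α * ‖fourierCoeffOn neg_pi_lt_pi f n‖ ^ 2 ≤
      ‖fourierCoeffOn neg_pi_lt_pi (fun θ => Complex.I⁻¹ * f' θ - α * f θ) n‖ ^ 2 := by
    have hnorm : ‖(n : ℂ) - α‖ ^ 2 = ((n : ℝ) - α) ^ 2 := by
      rw [← Complex.ofReal_intCast, ← Complex.ofReal_sub, Complex.norm_real, Real.norm_eq_abs,
        sq_abs]
    rw [fourierCoeffOn_angularMomentum_sub α hf hf'_int hper, norm_mul, mul_pow, hnorm]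
    gcongr
    exact rho_le α n
  have hparseval := hasSum_le hcoeff
    ((hasSum_sq_fourierCoeffOn neg_pi_lt_pi hf_mem).mul_left (rho α))
    (hasSum_sq_fourierCoeffOn neg_pi_lt_pi ((hf'.const_mul _).sub (hf_mem.const_mul _)))
  rw [smul_eq_mul, smul_eq_mul, mul_left_comm] at hparseval
  exact le_of_mul_le_mul_left hparseval (inv_pos.2 (sub_pos.2 neg_pi_lt_pi))

end Circle

lemma norm_smul_sub_smul_sq_le {E : Type*} [SeminormedAddCommGroup E] [NormedSpace ℝ E]
    (a b : ℝ) (v w : E) : ‖a • v - b • w‖ ^ 2 ≤ (a ^ 2 + b ^ 2) * (‖v‖ ^ 2 + ‖w‖ ^ 2) := by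
  have htri : ‖a • v - b • w‖ ≤ |a| * ‖v‖ + |b| * ‖w‖ := by
    simpa only [norm_smul, Real.norm_eq_abs] using norm_sub_le (a • v) (b • w)
  calc ‖a • v - b • w‖ ^ 2 ≤ (|a| * ‖v‖ + |b| * ‖w‖) ^ 2 := by gcongr
    _ ≤ (|a| ^ 2 + |b| ^ 2) * (‖v‖ ^ 2 + ‖w‖ ^ 2) := by
      linarith [sq_nonneg (|a| * ‖w‖ - |b| * ‖v‖)]
    _ = (a ^ 2 + b ^ 2) * (‖v‖ ^ 2 + ‖w‖ ^ 2) := by simp only [sq_abs]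

lemma fst_sq_add_snd_sq_pos {x : ℝ × ℝ} (hx : x ≠ 0) : 0 < x.1 ^ 2 + x.2 ^ 2 := by
  obtain hx₁ | hx₂ : x.1 ≠ 0 ∨ x.2 ≠ 0 := by
    contrapose! hx
    exact Prod.ext hx.1 hx.2
  all_goals positivity

lemma mul_cos_sq_add_mul_sin_sq (r θ : ℝ) : (r * cos θ) ^ 2 + (r * sin θ) ^ 2 = r ^ 2 := by
  rw [mul_pow, mul_pow, ← mul_add, cos_sq_add_sin_sq, mul_one]

lemma polar_ne_zero {r : ℝ} (hr : r ≠ 0) (θ : ℝ) : (r * cos θ, r * sin θ) ≠ (0 : ℝ × ℝ) := by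
  intro h
  obtain ⟨hcos, hsin⟩ := Prod.mk_eq_zero.1 h
  have hsq := mul_cos_sq_add_mul_sin_sq r θ
  rw [hcos, hsin] at hsq
  exact pow_ne_zero 2 hr (by linarith)

lemma continuous_comp_circle {E : Type*} [TopologicalSpace E] {h : ℝ × ℝ → E}
    (hh : ContinuousOn h {0}ᶜ) {r : ℝ} (hr : r ≠ 0) :
    Continuous fun θ => h (r * cos θ, r * sin θ) :=
  hh.comp_continuous (by fun_prop) (polar_ne_zero hr)

/-- The set of points whose squared Euclidean norm lies in `S`: `ℝ × ℝ` carries the sup norm, so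
`‖x‖` is not available, and for `S = (-∞, R²]` this is the closed disc of radius `R`. -/
def radialSet (S : Set ℝ) : Set (ℝ × ℝ) := {x | x.1 ^ 2 + x.2 ^ 2 ∈ S}

lemma measurableSet_radialSet {S : Set ℝ} (hS : MeasurableSet S) : MeasurableSet (radialSet S) :=
  (by fun_prop : Measurable fun x : ℝ × ℝ => x.1 ^ 2 + x.2 ^ 2) hS

lemma setLIntegral_radialSet {S : Set ℝ} (hS : MeasurableSet S) {F : ℝ × ℝ → ENNReal}
    (hF : Measurable F) :
    ∫⁻ x in radialSet S, F x =
      ∫⁻ r in (fun r => r ^ 2) ⁻¹' S ∩ Set.Ioi 0, ENNReal.ofReal r *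
        ∫⁻ θ in Set.Ioo (-π) π, F (r * cos θ, r * sin θ) := by
  have hS' : MeasurableSet ((fun r : ℝ => r ^ 2) ⁻¹' S) := measurableSet_preimage (by fun_prop) hS
  have hind (r θ : ℝ) : (radialSet S).indicator F (r * cos θ, r * sin θ) =
      ((fun r : ℝ => r ^ 2) ⁻¹' S).indicator (fun r => F (r * cos θ, r * sin θ)) r := by
    have hmem : (r * cos θ, r * sin θ) ∈ radialSet S ↔ r ∈ (fun r : ℝ => r ^ 2) ⁻¹' S := by
      simp only [radialSet, Set.mem_ofPred_eq, Set.mem_preimage, mul_cos_sq_add_mul_sin_sq]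
    classical simp only [Set.indicator_apply, hmem]
  have hmeas : Measurable fun p : ℝ × ℝ =>
      ENNReal.ofReal p.1 * (radialSet S).indicator F (p.1 * cos p.2, p.1 * sin p.2) :=
    (by fun_prop : Measurable fun p : ℝ × ℝ => ENNReal.ofReal p.1).mul
      ((hF.indicator (measurableSet_radialSet hS)).comp (by fun_prop))
  rw [← lintegral_indicator (measurableSet_radialSet hS), ← lintegral_comp_polarCoord_symm]
  simp only [polarCoord_target, polarCoord_symm_apply, smul_eq_mul]
  rw [Measure.volume_eq_prod, ← Measure.prod_restrict, lintegral_prod _ hmeas.aemeasurable,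
    ← Measure.restrict_restrict hS', ← lintegral_indicator hS']
  refine lintegral_congr fun r => ?_
  rw [lintegral_const_mul' _ _ ENNReal.ofReal_ne_top]
  by_cases hr : r ∈ (fun r : ℝ => r ^ 2) ⁻¹' S
  · simp only [hind, Set.indicator_of_mem hr]
  · simp only [hind, Set.indicator_of_notMem hr, lintegral_zero, mul_zero]

/-- The density `|((1/i)∇ - a_α)u|²` for the vector potential `a_α(x) = α(-x₂, x₁)/|x|²`. -/
noncomputable def magneticEnergy (α : ℝ) (u : ℝ × ℝ → ℂ) (x : ℝ × ℝ) : ℝ :=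
  ‖Complex.I⁻¹ * fderiv ℝ u x (1, 0) -
      ((α * (-x.2) / (x.1 ^ 2 + x.2 ^ 2) : ℝ) : ℂ) * u x‖ ^ 2 +
    ‖Complex.I⁻¹ * fderiv ℝ u x (0, 1) -
      ((α * x.1 / (x.1 ^ 2 + x.2 ^ 2) : ℝ) : ℂ) * u x‖ ^ 2

section MagneticEnergy

variable {α : ℝ} {u : ℝ × ℝ → ℂ}

lemma magneticEnergy_nonneg (x : ℝ × ℝ) : 0 ≤ magneticEnergy α u x := by
  unfold magneticEnergy
  positivity

lemma norm_angular_sq_div_le_magneticEnergy {x : ℝ × ℝ} (hx : x ≠ 0) :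
    ‖Complex.I⁻¹ * fderiv ℝ u x (-x.2, x.1) - α * u x‖ ^ 2 / (x.1 ^ 2 + x.2 ^ 2) ≤
      magneticEnergy α u x := by
  have hpos := fst_sq_add_snd_sq_pos hx
  have hne : (x.1 : ℂ) ^ 2 + (x.2 : ℂ) ^ 2 ≠ 0 := mod_cast hpos.ne'
  have hdir : fderiv ℝ u x (-x.2, x.1) =
      x.1 • fderiv ℝ u x (0, 1) - x.2 • fderiv ℝ u x (1, 0) := by
    rw [← map_smul, ← map_smul, ← map_sub]
    simp
  have hcross : Complex.I⁻¹ * fderiv ℝ u x (-x.2, x.1) - α * u x =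
      x.1 • (Complex.I⁻¹ * fderiv ℝ u x (0, 1) -
        ((α * x.1 / (x.1 ^ 2 + x.2 ^ 2) : ℝ) : ℂ) * u x) -
      x.2 • (Complex.I⁻¹ * fderiv ℝ u x (1, 0) -
        ((α * (-x.2) / (x.1 ^ 2 + x.2 ^ 2) : ℝ) : ℂ) * u x) := by
    rw [hdir]
    simp only [Complex.real_smul]
    push_cast
    field_simp
    ring
  rw [div_le_iff₀' hpos, hcross, magneticEnergy, add_comm (‖_‖ ^ 2)]
  exact norm_smul_sub_smul_sq_le _ _ _ _

lemma continuousOn_norm_sq_div (hu : ContinuousOn u {0}ᶜ) :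
    ContinuousOn (fun x => ‖u x‖ ^ 2 / (x.1 ^ 2 + x.2 ^ 2)) {0}ᶜ :=
  (hu.norm.pow 2).div (by fun_prop) fun _ hx => (fst_sq_add_snd_sq_pos hx).ne'

lemma continuousOn_magneticEnergy (hu : ContDiffOn ℝ 1 u {0}ᶜ) :
    ContinuousOn (magneticEnergy α u) {0}ᶜ := by
  have hderiv := hu.continuousOn_fderiv_of_isOpen isOpen_compl_singleton le_rfl
  have hpotential {c : ℝ × ℝ → ℝ} (hc : Continuous c) :
      ContinuousOn (fun x => ((c x / (x.1 ^ 2 + x.2 ^ 2) : ℝ) : ℂ)) {0}ᶜ :=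
    Complex.continuous_ofReal.comp_continuousOn
      (hc.continuousOn.div (by fun_prop) fun _ hx => (fst_sq_add_snd_sq_pos hx).ne')
  have hcomponent {c : ℝ × ℝ → ℝ} (hc : Continuous c) (v : ℝ × ℝ) :
      ContinuousOn (fun x => ‖Complex.I⁻¹ * fderiv ℝ u x v -
        ((c x / (x.1 ^ 2 + x.2 ^ 2) : ℝ) : ℂ) * u x‖ ^ 2) {0}ᶜ :=
    (((hderiv.clm_apply continuousOn_const).const_mul _).sub
      ((hpotential hc).mul hu.continuousOn)).norm.pow 2
  exact (hcomponent (by fun_prop) _).add (hcomponent (by fun_prop) _)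

lemma tsupport_magneticEnergy_subset : tsupport (magneticEnergy α u) ⊆ tsupport u :=
  closure_minimal (fun x hx => by
    contrapose! hx
    simp [magneticEnergy, image_eq_zero_of_notMem_tsupport hx, fderiv_of_notMem_tsupport ℝ hx])
    (isClosed_tsupport u)

lemma integrable_magneticEnergy (hu : ContDiffOn ℝ 1 u {0}ᶜ) (hsupp : HasCompactSupport u)
    (h0 : tsupport u ⊆ {0}ᶜ) : Integrable (magneticEnergy α u) :=
  ((continuousOn_magneticEnergy hu).continuous_of_tsupport_subset isOpen_compl_singleton
      (tsupport_magneticEnergy_subset.trans h0)).integrable_of_hasCompactSupport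
    (hsupp.of_isClosed_subset (isClosed_tsupport _) tsupport_magneticEnergy_subset)

lemma hasDerivAt_comp_circle (hu : DifferentiableOn ℝ u {0}ᶜ) {r : ℝ} (hr : r ≠ 0) (θ : ℝ) :
    HasDerivAt (fun θ => u (r * cos θ, r * sin θ))
      (fderiv ℝ u (r * cos θ, r * sin θ) (-(r * sin θ), r * cos θ)) θ := by
  have hcircle : HasDerivAt (fun θ => (r * cos θ, r * sin θ)) (-(r * sin θ), r * cos θ) θ := by
    simpa only [mul_neg] using
      ((hasDerivAt_cos θ).const_mul r).prodMk ((hasDerivAt_sin θ).const_mul r)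
  have hdiff : DifferentiableAt ℝ u (r * cos θ, r * sin θ) :=
    hu.differentiableAt (isOpen_compl_singleton.mem_nhds (polar_ne_zero hr θ))
  exact hdiff.hasFDerivAt.comp_hasDerivAt θ hcircle

lemma rho_mul_integral_circle_le (hu : ContDiffOn ℝ 1 u {0}ᶜ) {r : ℝ} (hr : r ≠ 0) :
    rho α * ∫ θ in (-π)..π,
        ‖u (r * cos θ, r * sin θ)‖ ^ 2 / ((r * cos θ) ^ 2 + (r * sin θ) ^ 2) ≤
      ∫ θ in (-π)..π, magneticEnergy α u (r * cos θ, r * sin θ) := by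
  set f : ℝ → ℂ := fun θ => u (r * cos θ, r * sin θ) with hf_def
  set f' : ℝ → ℂ := fun θ => fderiv ℝ u (r * cos θ, r * sin θ) (-(r * sin θ), r * cos θ)
  have hf (θ : ℝ) : HasDerivAt f (f' θ) θ :=
    hasDerivAt_comp_circle (hu.differentiableOn one_ne_zero) hr θ
  have hf'_cont : Continuous f' :=
    (continuous_comp_circle (hu.continuousOn_fderiv_of_isOpen isOpen_compl_singleton le_rfl)
      hr).clm_apply (by fun_prop)
  have hf_cont : Continuous f := continuous_comp_circle hu.continuousOn hr
  calc rho α * ∫ θ in (-π)..π, ‖f θ‖ ^ 2 / ((r * cos θ) ^ 2 + (r * sin θ) ^ 2)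
      = (rho α * ∫ θ in (-π)..π, ‖f θ‖ ^ 2) / r ^ 2 := by
        simp only [mul_cos_sq_add_mul_sin_sq, intervalIntegral.integral_div, mul_div_assoc]
    _ ≤ (∫ θ in (-π)..π, ‖Complex.I⁻¹ * f' θ - α * f θ‖ ^ 2) / r ^ 2 := by
        gcongr
        exact rho_mul_integral_norm_sq_le α (fun θ _ => hf θ)
          (memLp_Ioc_of_continuousOn_Icc hf'_cont.continuousOn 2) (by simp [hf_def])
    _ = ∫ θ in (-π)..π, ‖Complex.I⁻¹ * f' θ - α * f θ‖ ^ 2 /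
          ((r * cos θ) ^ 2 + (r * sin θ) ^ 2) := by
        simp only [mul_cos_sq_add_mul_sin_sq, intervalIntegral.integral_div]
    _ ≤ ∫ θ in (-π)..π, magneticEnergy α u (r * cos θ, r * sin θ) := by
        refine intervalIntegral.integral_mono neg_pi_lt_pi.le
          (Continuous.intervalIntegrable ?_ _ _)
          ((continuous_comp_circle (continuousOn_magneticEnergy hu) hr).intervalIntegrable _ _)
          fun θ => norm_angular_sq_div_le_magneticEnergy (polar_ne_zero hr θ)
        simp only [mul_cos_sq_add_mul_sin_sq]
        fun_prop

lemma rho_mul_setLIntegral_circle_le (hu : ContDiffOn ℝ 1 u {0}ᶜ) {r : ℝ} (hr : r ≠ 0) :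
    ENNReal.ofReal (rho α) * ∫⁻ θ in Set.Ioo (-π) π, ENNReal.ofReal
        (‖u (r * cos θ, r * sin θ)‖ ^ 2 / ((r * cos θ) ^ 2 + (r * sin θ) ^ 2)) ≤
      ∫⁻ θ in Set.Ioo (-π) π,
        ENNReal.ofReal (magneticEnergy α u (r * cos θ, r * sin θ)) := by
  have hweight := continuous_comp_circle (continuousOn_norm_sq_div hu.continuousOn) hr
  have henergy := continuous_comp_circle (continuousOn_magneticEnergy (α := α) hu) hr
  rw [setLIntegral_Ioo_ofReal neg_pi_lt_pi.le (hweight.intervalIntegrable _ _)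
      (fun θ => by positivity),
    setLIntegral_Ioo_ofReal neg_pi_lt_pi.le (henergy.intervalIntegrable _ _)
      (fun θ => magneticEnergy_nonneg _), ← ENNReal.ofReal_mul (rho_nonneg α)]
  exact ENNReal.ofReal_le_ofReal (rho_mul_integral_circle_le hu hr)

lemma rho_mul_setLIntegral_radialSet_le (hu : ContDiffOn ℝ 1 u {0}ᶜ) {S : Set ℝ}
    (hS : MeasurableSet S) :
    ENNReal.ofReal (rho α) *
        ∫⁻ x in radialSet S, ENNReal.ofReal (‖u x‖ ^ 2 / (x.1 ^ 2 + x.2 ^ 2)) ≤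
      ∫⁻ x in radialSet S, ENNReal.ofReal (magneticEnergy α u x) := by
  have hweight := measurable_of_continuousOn_compl_singleton 0
    (continuousOn_norm_sq_div hu.continuousOn)
  have henergy := measurable_of_continuousOn_compl_singleton 0
    (continuousOn_magneticEnergy (α := α) hu)
  have hS' : MeasurableSet ((fun r : ℝ => r ^ 2) ⁻¹' S ∩ Set.Ioi 0) :=
    (measurableSet_preimage (by fun_prop) hS).inter measurableSet_Ioi
  rw [setLIntegral_radialSet hS hweight.ennreal_ofReal,
    setLIntegral_radialSet hS henergy.ennreal_ofReal,
    ← lintegral_const_mul' _ _ ENNReal.ofReal_ne_top]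
  refine setLIntegral_mono' hS' fun r hr => ?_
  rw [mul_left_comm]
  gcongr
  exact rho_mul_setLIntegral_circle_le hu hr.2.ne'

end MagneticEnergy

/-- Where `ρ(α) ≠ 0`, finite energy makes the weighted `L²` norm finite too, so the left-hand
side is not the junk value of a divergent integral. -/
theorem laptev_weidl_hardy_general {α : ℝ} {u : ℝ × ℝ → ℂ} (hu : ContDiffOn ℝ 1 u {0}ᶜ)
    {S : Set ℝ} (hS : MeasurableSet S) (hE : IntegrableOn (magneticEnergy α u) (radialSet S)) :
    rho α * ∫ x in radialSet S, ‖u x‖ ^ 2 / (x.1 ^ 2 + x.2 ^ 2) ≤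
      ∫ x in radialSet S, magneticEnergy α u x := by
  have hweight := measurable_of_continuousOn_compl_singleton 0
    (continuousOn_norm_sq_div hu.continuousOn)
  rw [integral_eq_lintegral_of_nonneg_ae (ae_of_all _ fun x => by positivity)
      hweight.aestronglyMeasurable,
    integral_eq_lintegral_of_nonneg_ae (ae_of_all _ magneticEnergy_nonneg) hE.1,
    ← ENNReal.toReal_ofReal (rho_nonneg α), ← ENNReal.toReal_mul]
  exact ENNReal.toReal_mono hE.lintegral_lt_top.ne (rho_mul_setLIntegral_radialSet_le hu hS)

/-- The Laptev–Weidl Hardy-type inequality for the Aharonov–Bohm vector potential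
`a_α(x) = α(-x₂, x₁)/|x|²`: for `u ∈ C_c^∞(ℝ² \ {0})` and every `R > 0`,
`∫_{|x|≤R} |((1/i)∇ - a_α)u|² dx ≥ ρ(α) ∫_{|x|≤R} |u|²/|x|² dx`. -/
theorem laptev_weidl_hardy (α : ℝ) (u : ℝ × ℝ → ℂ)
    (hu : ContDiff ℝ (⊤ : ℕ∞) u) (hsupp : HasCompactSupport u)
    (h0 : tsupport u ⊆ {x : ℝ × ℝ | x ≠ 0}) (R : ℝ) (hR : 0 < R) :
    rho α * ∫ x in {x : ℝ × ℝ | x.1 ^ 2 + x.2 ^ 2 ≤ R ^ 2},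
        ‖u x‖ ^ 2 / (x.1 ^ 2 + x.2 ^ 2) ≤
      ∫ x in {x : ℝ × ℝ | x.1 ^ 2 + x.2 ^ 2 ≤ R ^ 2},
        (‖(Complex.I)⁻¹ * fderiv ℝ u x (1, 0) -
            ((α * (-x.2) / (x.1 ^ 2 + x.2 ^ 2) : ℝ) : ℂ) * u x‖ ^ 2 +
         ‖(Complex.I)⁻¹ * fderiv ℝ u x (0, 1) -
            ((α * x.1 / (x.1 ^ 2 + x.2 ^ 2) : ℝ) : ℂ) * u x‖ ^ 2) :=
  have hu' : ContDiffOn ℝ 1 u {0}ᶜ := (hu.of_le (by simp)).contDiffOn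
  laptev_weidl_hardy_general hu' (measurableSet_Iic (a := R ^ 2))
    (integrable_magneticEnergy hu' hsupp h0).integrableOn
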